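/- arXiv:2303.07672 — 2 statements merged into one kernel-verified Lean document; each statement's English description precedes it below -/
import Mathlib

section
/- Let p be a prime, let k be a perfect field of characteristic p, and let A be a commutative k-algebra of characteristic p that is étale over k (formally étale and finitely presented). Then A is a perfect ring, i.e. the p-power map x ↦ x^p on A is bijective. -/
universe u

/-!
The Frobenius of `A` composed with the structure map `k → A` is the structure map preceded by the
Frobenius of `k`. The latter is bijective, so the Frobenius of `A` is a ring map between étale
`k`-algebras and hence étale. It is moreover purely inseparable with nil kernel, and such an étale
ring map `R → S` is bijective:
* the ideal of the diagonal in `S ⊗[R] S` is finitely generated and nil, so it is nilpotent and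
  unramifiedness makes the two inclusions of `S` agree; thus `R → S` is a finite epimorphism,
  which is surjective;
* the kernel is then idempotent by smoothness and nilpotent by finite presentation, hence zero.
-/

section PurelyInseparable

open scoped TensorProduct

variable {R S : Type*} [CommRing R] [CommRing S] [Algebra R S]

theorem isEpi_of_formallyUnramified_of_isNilpotent_tmul_sub_tmul [Algebra.EssFiniteType R S]
    [Algebra.FormallyUnramified R S]
    (h : ∀ s : S, IsNilpotent ((1 : S) ⊗ₜ[R] s - s ⊗ₜ[R] (1 : S))) : Algebra.IsEpi R S := by
  have ideal_le_nilradical : KaehlerDifferential.ideal R S ≤ nilradical (S ⊗[R] S) := by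
    rw [← KaehlerDifferential.span_range_eq_ideal, Ideal.span_le]
    rintro _ ⟨s, rfl⟩
    exact h s
  have ideal_nilpotent : IsNilpotent (KaehlerDifferential.ideal R S) :=
    (KaehlerDifferential.ideal_fg R S).isNilpotent_iff_le_nilradical.mpr ideal_le_nilradical
  have includeRight_eq_includeLeft :
      (Algebra.TensorProduct.includeRight : S →ₐ[R] S ⊗[R] S) =
        Algebra.TensorProduct.includeLeft :=
    Algebra.FormallyUnramified.ext _ ideal_nilpotent fun s ↦
      Ideal.Quotient.eq.mpr (KaehlerDifferential.one_smul_sub_smul_one_mem_ideal R s)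
  exact (Algebra.isEpi_iff_forall_one_tmul_eq R S).mpr
    (DFunLike.congr_fun includeRight_eq_includeLeft)

theorem isNilpotent_tmul_sub_tmul_of_pow_mem_range (p : ℕ) [ExpChar S p] {n : ℕ} {s : S}
    (hs : s ^ p ^ n ∈ (algebraMap R S).range) :
    IsNilpotent ((1 : S) ⊗ₜ[R] s - s ⊗ₜ[R] (1 : S)) := by
  have includeLeft_injective :
      Function.Injective (Algebra.TensorProduct.includeLeftRingHom : S →+* S ⊗[R] S) :=
    Function.LeftInverse.injective (g := Algebra.TensorProduct.lmul' R) fun s ↦ by simp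
  have : ExpChar (S ⊗[R] S) p := expChar_of_injective_ringHom includeLeft_injective p
  obtain ⟨r, hr⟩ := hs
  refine ⟨p ^ n, ?_⟩
  rw [sub_pow_expChar_pow, Algebra.TensorProduct.tmul_pow, Algebra.TensorProduct.tmul_pow,
    one_pow, ← hr, Algebra.TensorProduct.tmul_one_eq_one_tmul, sub_self]

theorem surjective_algebraMap_of_formallyUnramified_of_pow_mem_range (p : ℕ) [ExpChar S p]
    [Algebra.FiniteType R S] [Algebra.FormallyUnramified R S]
    (h : ∀ s : S, ∃ n, s ^ p ^ n ∈ (algebraMap R S).range) :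
    Function.Surjective (algebraMap R S) := by
  have : Algebra.IsIntegral R S := ⟨fun s ↦ by
    obtain ⟨n, r, hr⟩ := h s
    exact .of_pow (expChar_pow_pos S p n) (hr ▸ isIntegral_algebraMap)⟩
  have : Module.Finite R S := Algebra.IsIntegral.finite
  have : Algebra.IsEpi R S := isEpi_of_formallyUnramified_of_isNilpotent_tmul_sub_tmul fun s ↦
    have ⟨_, hn⟩ := h s
    isNilpotent_tmul_sub_tmul_of_pow_mem_range p hn
  exact Algebra.isEpi_iff_surjective_algebraMap_of_finite.mp this

theorem injective_algebraMap_of_etale_of_surjective_of_ker_le_nilradical [Algebra.Etale R S]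
    (hsurj : Function.Surjective (algebraMap R S))
    (hker : RingHom.ker (algebraMap R S) ≤ nilradical R) :
    Function.Injective (algebraMap R S) := by
  have ker_fg : (RingHom.ker (algebraMap R S)).FG :=
    Algebra.FinitePresentation.ker_fG_of_surjective (Algebra.ofId R S) hsurj
  have ker_idempotent : IsIdempotentElem (RingHom.ker (algebraMap R S)) :=
    (Algebra.FormallyEtale.iff_of_surjective hsurj).mp inferInstance
  obtain ⟨n, hn⟩ := ker_fg.isNilpotent_iff_le_nilradical.mpr hker
  rw [RingHom.injective_iff_ker_eq_bot, ← Ideal.zero_eq_bot, ← ker_idempotent.pow_succ_eq n,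
    pow_succ, hn, zero_mul]

end PurelyInseparable

theorem bijective_of_etale_of_pow_mem_range_of_ker_le_nilradical {R S : Type*} [CommRing R]
    [CommRing S] (p : ℕ) [ExpChar S p] {f : R →+* S} (hf : f.Etale)
    (hpow : ∀ s : S, ∃ n, s ^ p ^ n ∈ f.range) (hker : RingHom.ker f ≤ nilradical R) :
    Function.Bijective f := by
  algebraize [f]
  have hsurj : Function.Surjective (algebraMap R S) :=
    surjective_algebraMap_of_formallyUnramified_of_pow_mem_range p hpow
  exact ⟨injective_algebraMap_of_etale_of_surjective_of_ker_le_nilradical hsurj hker, hsurj⟩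

section Composition

variable {R S T : Type*} [CommRing R] [CommRing S] [CommRing T] {f : R →+* S} {g : S →+* T}

theorem etale_comp (hg : g.Etale) (hf : f.Etale) : (g.comp f).Etale := by
  algebraize [f, g, g.comp f]
  exact Algebra.Etale.comp R S T

theorem etale_of_etale_comp (hf : f.Etale) (hgf : (g.comp f).Etale) : g.Etale := by
  algebraize [f, g, g.comp f]
  exact Algebra.Etale.of_restrictScalars R S T

end Composition

theorem etale_frobenius_of_perfectRing (p : ℕ) (k A : Type*) [CommRing k] [ExpChar k p]
    [PerfectRing k p] [CommRing A] [ExpChar A p] [Algebra k A] [Algebra.Etale k A] :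
    (frobenius A p).Etale := by
  have algebraMap_etale : (algebraMap k A).Etale := RingHom.etale_algebraMap.mpr inferInstance
  refine etale_of_etale_comp algebraMap_etale ?_
  rw [← RingHom.frobenius_comm]
  exact etale_comp algebraMap_etale (.of_bijective (bijective_frobenius k p))

theorem stmt_8_general (p : ℕ) (k A : Type*) [CommRing k] [ExpChar k p] [PerfectRing k p]
    [CommRing A] [ExpChar A p] [Algebra k A] [Algebra.Etale k A] : PerfectRing A p where
  bijective_frobenius := bijective_of_etale_of_pow_mem_range_of_ker_le_nilradical p
    (etale_frobenius_of_perfectRing p k A)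
    (fun a ↦ ⟨1, a, by rw [frobenius_def, pow_one]⟩)
    (fun _ ha ↦ ⟨p, ha⟩)

/-- Every étale algebra of characteristic `p` over a perfect field `k` of characteristic
`p` is a perfect ring. -/
theorem stmt_8 (p : ℕ) [Fact p.Prime] (k : Type u) [Field k] [CharP k p]
    (hk : Function.Bijective fun x : k => x ^ p)
    (A : Type u) [CommRing A] [CharP A p] [Algebra k A] (hA : Algebra.Etale k A) :
    Function.Bijective fun a : A => a ^ p := by
  have : PerfectRing k p := ⟨hk⟩
  exact (stmt_8_general p k A).bijective_frobenius
end

section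
/- Let p be a prime, let R be a commutative ring of characteristic p, and let A be an étale R-algebra (formally étale and finitely presented). Let A^{(p)} denote the base change A ⊗_R R_φ, where R_φ is R regarded as an R-algebra via the Frobenius endomorphism φ : R → R, x ↦ x^p. Then the relative Frobenius map A^{(p)} → A, determined by a ⊗ r ↦ r · a^p (where r acts on A through the structure map R → A), is bijective; in particular it is an isomorphism. -/
universe u

/-- `Rfrob R` is `R` regarded as an algebra over itself via the Frobenius endomorphism. -/
def Rfrob (R : Type u) : Type u := R

instance (R : Type u) [CommRing R] : CommRing (Rfrob R) := inferInstanceAs (CommRing R)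

/-- The `R`-algebra structure on `Rfrob R` given by the Frobenius `x ↦ x ^ p`. -/
noncomputable def Rfrob.algebra (p : ℕ) [Fact p.Prime] (R : Type u) [CommRing R]
    [CharP R p] : Algebra R (Rfrob R) :=
  letI : ExpChar R p := ExpChar.prime Fact.out
  ((frobenius R p : R →+* R) : R →+* Rfrob R).toAlgebra

/-!
The relative Frobenius `F : A ⊗[R] Rfrob R → A` is `p`-radical: `a ^ p = F (a ⊗ 1)`, and
`F b ⊗ 1 = b ^ p`, so every `b` with `F b = 0` is nilpotent. It is weakly étale by cancellation,
since its composite with the base change `Rfrob R → A ⊗[R] Rfrob R` is `R → A`.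

A weakly étale `p`-radical map `B → A` is bijective. It is flat and bijective on spectra, hence
faithfully flat. The multiplication `A ⊗[B] A → A` is also flat and `p`-radical, because its kernel
is generated by the nilpotents `1 ⊗ a - a ⊗ 1`; so it is faithfully flat too, in particular
injective, which makes `B → A` an epimorphism. A faithfully flat epimorphism is bijective.
-/

section

open Algebra Function TensorProduct

section WeaklyEtale

theorem flat_of_flat_lmul' {R S T : Type u} [CommRing R] [CommRing S] [CommRing T] [Algebra R S]
    [Algebra S T] [Algebra R T] [IsScalarTower R S T] [Module.Flat R T]
    (h : (TensorProduct.lmul' R (S := S)).Flat) : Module.Flat S T := by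
  -- Factor `S → T` as `S → S ⊗[R] T → S ⊗[S] T ≃ T`, where the second map is a base change of `h`.
  have lsmul_flat := (h.mapOfCompatibleSMul S T).comp
    (.of_bijective (f := (Algebra.TensorProduct.lid S T).toRingEquiv.toRingHom)
      (Algebra.TensorProduct.lid S T).bijective)
  have tensor_flat : (algebraMap S (S ⊗[R] T)).Flat :=
    RingHom.flat_algebraMap_iff.mpr inferInstance
  rw [← RingHom.flat_algebraMap_iff]
  convert tensor_flat.comp lsmul_flat
  ext s
  simp [TensorProduct.algebraMap_apply, Algebra.smul_def]

theorem flat_of_comp_of_surjective {R S T : Type u} [CommRing R] [CommRing S] [CommRing T]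
    {f : R →+* S} {g : S →+* T} (hf : Surjective f) (hgf : (g.comp f).Flat) : g.Flat := by
  algebraize [f, g, g.comp f]
  have := isEpi_of_surjective_algebraMap R S hf
  refine flat_of_flat_lmul' (R := R) (.of_bijective ⟨IsEpi.injective_lift_mul, fun s ↦ ?_⟩)
  exact ⟨s ⊗ₜ 1, by simp⟩

theorem weaklyEtale_of_restrictScalars {R S T : Type u} [CommRing R] [CommRing S] [CommRing T]
    [Algebra R S] [Algebra S T] [Algebra R T] [IsScalarTower R S T] [WeaklyEtale R T]
    (h : (TensorProduct.lmul' R (S := S)).Flat) : WeaklyEtale S T where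
  flat := flat_of_flat_lmul' h
  flat_lmul' := by
    refine flat_of_comp_of_surjective
      (f := (Algebra.TensorProduct.mapOfCompatibleSMul S R T T T).toRingHom)
      (Algebra.TensorProduct.mapOfCompatibleSMul_surjective S R T T T) ?_
    convert WeaklyEtale.flat_lmul' R T
    ext x <;> simp

theorem weaklyEtale_of_algEquiv {R A B : Type*} [CommRing R] [CommRing A] [CommRing B]
    [Algebra R A] [Algebra R B] [WeaklyEtale R A] (e : A ≃ₐ[R] B) : WeaklyEtale R B := by
  let : Algebra A B := e.toRingHom.toAlgebra
  have : IsScalarTower R A B := .of_algebraMap_eq fun r ↦ (e.commutes r).symm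
  have : Etale A B := .of_equiv (.ofBijective (ofId A B) e.bijective)
  exact .trans R A B

attribute [local instance] TensorProduct.rightAlgebra in
theorem weaklyEtale_productMap {R S A B : Type u} [CommRing R] [CommRing S] [CommRing A]
    [CommRing B] [Algebra R S] [Algebra R A] [Algebra R B] [Algebra S B] [IsScalarTower R S B]
    [WeaklyEtale R A] [WeaklyEtale S B] (f : A →ₐ[R] B) :
    letI := (TensorProduct.productMap f (IsScalarTower.toAlgHom R S B)).toRingHom.toAlgebra
    WeaklyEtale (A ⊗[R] S) B := by
  let := (TensorProduct.productMap f (IsScalarTower.toAlgHom R S B)).toRingHom.toAlgebra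
  have : IsScalarTower S (A ⊗[R] S) B := .of_algebraMap_eq fun s ↦
    (TensorProduct.productMap_right_apply f (IsScalarTower.toAlgHom R S B) s).symm
  have : WeaklyEtale S (A ⊗[R] S) :=
    weaklyEtale_of_algEquiv (Algebra.TensorProduct.commRight R S A)
  exact weaklyEtale_of_restrictScalars (WeaklyEtale.flat_lmul' S (A ⊗[R] S))

end WeaklyEtale

theorem bijective_algebraMap_of_faithfullyFlat_of_isEpi {A B : Type*} [CommRing A] [CommRing B]
    [Algebra B A] [Module.FaithfullyFlat B A] [Algebra.IsEpi B A] : Bijective (algebraMap B A) := by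
  have lmul_injective : Injective (TensorProduct.lmul' B (S := A)) := IsEpi.injective_lift_mul
  have lmul_leftInverse : LeftInverse (TensorProduct.lmul' B) (algebraMap A (A ⊗[B] A)) :=
    fun a ↦ by simp
  exact Module.FaithfullyFlat.bijective_of_tensorProduct (S := A)
    ⟨lmul_leftInverse.injective,
      (lmul_leftInverse.rightInverse_of_injective lmul_injective).surjective⟩

section IsPRadical

variable {A B : Type*} [CommRing A] [CommRing B] [Algebra B A] (p : ℕ) [ExpChar A p]

theorem faithfullyFlat_of_flat_of_isPRadical [Module.Flat B A] [IsPRadical (algebraMap B A) p] :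
    Module.FaithfullyFlat B A := by
  refine .of_comap_surjective (PrimeSpectrum.isHomeomorph_comap (algebraMap B A) (fun a ↦ ?_)
    ((IsPRadical.ker_le _ p).trans pNilradical_le_nilradical)).surjective
  obtain ⟨n, b, hb⟩ := IsPRadical.pow_mem (algebraMap B A) p a
  exact ⟨p ^ n, pow_pos (expChar_pos A p) n, b, hb⟩

theorem isPRadical_lmul' [IsPRadical (algebraMap B A) p] :
    IsPRadical (TensorProduct.lmul' B (S := A)).toRingHom p where
  pow_mem' a := ⟨0, a ⊗ₜ 1, by simp⟩
  ker_le' := by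
    have : ExpChar (A ⊗[B] A) p := expChar_of_injective_algebraMap (R := A)
      (LeftInverse.injective (g := TensorProduct.lmul' B) fun a ↦ by simp) p
    change KaehlerDifferential.ideal B A ≤ _
    rw [← KaehlerDifferential.span_range_eq_ideal, Ideal.span_le]
    rintro _ ⟨a, rfl⟩
    obtain ⟨n, b, hb⟩ := IsPRadical.pow_mem (algebraMap B A) p a
    refine sub_mem_pNilradical_iff_pow_expChar_pow_eq.mpr ⟨n, ?_⟩
    simp only [TensorProduct.tmul_pow, one_pow, ← hb, TensorProduct.tmul_one_eq_one_tmul]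

theorem isEpi_of_isPRadical (hflat : (TensorProduct.lmul' B (S := A)).Flat)
    [IsPRadical (algebraMap B A) p] : Algebra.IsEpi B A := by
  algebraize [(TensorProduct.lmul' B (S := A)).toRingHom]
  have : IsPRadical (algebraMap (A ⊗[B] A) A) p := isPRadical_lmul' p
  have : Module.FaithfullyFlat (A ⊗[B] A) A := faithfullyFlat_of_flat_of_isPRadical p
  exact ⟨FaithfulSMul.algebraMap_injective (A ⊗[B] A) A⟩

theorem bijective_algebraMap_of_isPRadical [WeaklyEtale B A] [IsPRadical (algebraMap B A) p] :
    Bijective (algebraMap B A) := by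
  have := faithfullyFlat_of_flat_of_isPRadical (A := A) (B := B) p
  have := isEpi_of_isPRadical p (WeaklyEtale.flat_lmul' B A)
  exact bijective_algebraMap_of_faithfullyFlat_of_isEpi

end IsPRadical

section RelativeFrobenius

theorem ringHom_ext_tmul {R A B C : Type*} [CommSemiring R] [Semiring A] [Semiring B]
    [Algebra R A] [Algebra R B] [Semiring C] {f g : A ⊗[R] B →+* C}
    (h : ∀ a b, f (a ⊗ₜ b) = g (a ⊗ₜ b)) : f = g :=
  TensorProduct.ringHom_ext (RingHom.ext fun a ↦ h a 1) (RingHom.ext fun b ↦ h 1 b)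

theorem natCast_eq_zero_of_charP_algebra (p : ℕ) (R A : Type*) [CommSemiring R] [CharP R p]
    [Semiring A] [Algebra R A] : (p : A) = 0 := by
  rw [← map_natCast (algebraMap R A), CharP.cast_eq_zero, map_zero]

variable (p : ℕ) [Fact p.Prime] (R : Type u) [CommRing R] [CharP R p]
  (A : Type u) [CommRing A] [Algebra R A]

/-- The `p`-th power endomorphism of an algebra `A` over a ring of characteristic `p`. Unlike
`frobenius A p`, it is also available when `A` is the zero ring. -/
def algebraFrobenius : A →+* A where
  __ := powMonoidHom p
  map_zero' := zero_pow (Nat.Prime.ne_zero Fact.out)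
  map_add' a b := by
    obtain ⟨c, hc⟩ := exists_add_pow_prime_eq (Fact.out : p.Prime) a b
    change (a + b) ^ p = a ^ p + b ^ p
    simp only [hc, natCast_eq_zero_of_charP_algebra p R A, zero_mul, add_zero]

attribute [local instance] Rfrob.algebra

instance Rfrob.instAlgebra (R A : Type u) [CommRing R] [CommRing A] [Algebra R A] :
    Algebra (Rfrob R) (Rfrob A) :=
  inferInstanceAs (Algebra R A)

/-- The `R`-algebra structure on `Rfrob A` obtained by restricting its `Rfrob R`-algebra structure
along Frobenius. It makes `a ↦ a ^ p` an `R`-algebra homomorphism `A → Rfrob A`. It is not an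
instance, since for `A = R` it would compete with `Rfrob.algebra`. -/
noncomputable abbrev Rfrob.algebraOfAlgebra : Algebra R (Rfrob A) :=
  ((algebraMap (Rfrob R) (Rfrob A)).comp (algebraMap R (Rfrob R))).toAlgebra

/-- The relative Frobenius `A^{(p)} → A`, `a ⊗ r ↦ r · a ^ p`, of an algebra `A` over a ring `R` of
characteristic `p`. The target is treated as `Rfrob A` in the construction, so that both factors
map to it `R`-linearly. -/
noncomputable def relativeFrobenius : A ⊗[R] Rfrob R →+* A :=
  letI := Rfrob.algebraOfAlgebra p R A
  haveI : IsScalarTower R (Rfrob R) (Rfrob A) := .of_algebraMap_eq' rfl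
  let frob : A →ₐ[R] Rfrob A :=
    { algebraFrobenius p R A with commutes' r := (map_pow (algebraMap R A) r p).symm }
  (TensorProduct.productMap frob (IsScalarTower.toAlgHom R (Rfrob R) (Rfrob A))).toRingHom

variable {A} in
theorem relativeFrobenius_tmul (a : A) (r : R) :
    relativeFrobenius p R A (a ⊗ₜ[R] (r : Rfrob R)) = algebraMap R A r * a ^ p :=
  mul_comm _ _

variable {A} in
theorem relativeFrobenius_tmul_one (a : A) :
    relativeFrobenius p R A (a ⊗ₜ[R] 1) = a ^ p :=
  (relativeFrobenius_tmul p R a 1).trans (by rw [map_one, one_mul])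

theorem relativeFrobenius_one_tmul (r : R) :
    relativeFrobenius p R A (1 ⊗ₜ[R] (r : Rfrob R)) = algebraMap R A r :=
  (relativeFrobenius_tmul p R 1 r).trans (by rw [one_pow, mul_one])

theorem includeLeft_comp_relativeFrobenius :
    TensorProduct.includeLeftRingHom.comp (relativeFrobenius p R A) =
      algebraFrobenius p R (A ⊗[R] Rfrob R) := by
  ext x
  · calc relativeFrobenius p R A (x ⊗ₜ[R] 1) ⊗ₜ[R] (1 : Rfrob R)
      _ = (x ^ p) ⊗ₜ[R] 1 := by rw [relativeFrobenius_tmul_one]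
      _ = (x ⊗ₜ[R] 1) ^ p := by rw [TensorProduct.tmul_pow, one_pow]
  · calc relativeFrobenius p R A (1 ⊗ₜ[R] x) ⊗ₜ[R] (1 : Rfrob R)
      _ = algebraMap R A x ⊗ₜ[R] 1 := congrArg (· ⊗ₜ 1) (relativeFrobenius_one_tmul p R A x)
      _ = 1 ⊗ₜ[R] (x ^ p) := TensorProduct.tmul_one_eq_one_tmul (R := R) x
      _ = (1 ⊗ₜ[R] x) ^ p := by rw [TensorProduct.tmul_pow, one_pow]

theorem isPRadical_relativeFrobenius : IsPRadical (relativeFrobenius p R A) p where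
  pow_mem' a := ⟨1, a ⊗ₜ 1, by rw [relativeFrobenius_tmul_one, pow_one]⟩
  ker_le' x hx := by
    have pow_eq_zero : x ^ p = 0 := calc
      x ^ p = relativeFrobenius p R A x ⊗ₜ[R] 1 :=
        (RingHom.congr_fun (includeLeft_comp_relativeFrobenius p R A) x).symm
      _ = 0 := by rw [RingHom.mem_ker.mp hx, TensorProduct.zero_tmul]
    exact mem_pNilradical.mpr ⟨1, by rwa [pow_one]⟩

theorem weaklyEtale_relativeFrobenius [WeaklyEtale R A] :
    letI := (relativeFrobenius p R A).toAlgebra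
    WeaklyEtale (A ⊗[R] Rfrob R) A := by
  let := Rfrob.algebraOfAlgebra p R A
  have : IsScalarTower R (Rfrob R) (Rfrob A) := .of_algebraMap_eq' rfl
  have : WeaklyEtale (Rfrob R) (Rfrob A) := ‹WeaklyEtale R A›
  exact weaklyEtale_productMap (S := Rfrob R) (B := Rfrob A) _

theorem relativeFrobenius_bijective [WeaklyEtale R A] :
    Bijective (relativeFrobenius p R A) := by
  rcases subsingleton_or_nontrivial A
  · exact ⟨injective_of_subsingleton _, surjective_to_subsingleton _⟩
  have : CharP A p :=
    (CharP.charP_iff_prime_eq_zero Fact.out).mpr (natCast_eq_zero_of_charP_algebra p R A)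
  have : ExpChar A p := .prime Fact.out
  let := (relativeFrobenius p R A).toAlgebra
  have : WeaklyEtale (A ⊗[R] Rfrob R) A := weaklyEtale_relativeFrobenius p R A
  have : IsPRadical (algebraMap (A ⊗[R] Rfrob R) A) p := isPRadical_relativeFrobenius p R A
  exact bijective_algebraMap_of_isPRadical p

end RelativeFrobenius

end

open TensorProduct in
theorem stmt_9_general (p : ℕ) [Fact p.Prime] (R : Type u) [CommRing R] [CharP R p]
    (A : Type u) [CommRing A] [Algebra R A] [Algebra.WeaklyEtale R A] :
    letI : Algebra R (Rfrob R) := Rfrob.algebra p R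
    ∃ F : (A ⊗[R] Rfrob R) →+* A,
      (∀ (a : A) (r : R), F (a ⊗ₜ[R] (r : Rfrob R)) = algebraMap R A r * a ^ p) ∧
      Function.Bijective F ∧
      ∀ G : (A ⊗[R] Rfrob R) →+* A,
        (∀ (a : A) (r : R), G (a ⊗ₜ[R] (r : Rfrob R)) = algebraMap R A r * a ^ p) → G = F :=
  let := Rfrob.algebra p R
  ⟨relativeFrobenius p R A, relativeFrobenius_tmul p R, relativeFrobenius_bijective p R A,
    fun _ hG ↦ ringHom_ext_tmul fun a r ↦ (hG a r).trans (relativeFrobenius_tmul p R a r).symm⟩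

open TensorProduct in
/-- If `R` has characteristic `p` and `A` is an étale `R`-algebra, then the relative
Frobenius map `A ⊗[R] Rfrob R → A`, determined by `a ⊗ r ↦ algebraMap R A r * a ^ p`,
is bijective (in particular, an isomorphism of rings). -/
theorem stmt_9 (p : ℕ) [Fact p.Prime] (R : Type u) [CommRing R] [CharP R p]
    (A : Type u) [CommRing A] [Algebra R A] (hA : Algebra.Etale R A) :
    letI : Algebra R (Rfrob R) := Rfrob.algebra p R
    ∃ F : (A ⊗[R] Rfrob R) →+* A,
      (∀ (a : A) (r : R), F (a ⊗ₜ[R] (r : Rfrob R)) = algebraMap R A r * a ^ p) ∧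
      Function.Bijective F ∧
      ∀ G : (A ⊗[R] Rfrob R) →+* A,
        (∀ (a : A) (r : R), G (a ⊗ₜ[R] (r : Rfrob R)) = algebraMap R A r * a ^ p) → G = F :=
  stmt_9_general p R A
end
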